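/- Translation invariance of the constructed approximation (odd case): Under the hypotheses that M = 2K + 1, λ_0 > 0, λ_1, …, λ_K > 0, the Gram matrix G of atoms a(θ_1), …, a(θ_M) ∈ H is invertible and G(l, j) = λ_0 + Σ_{k=1}^K λ_k cos(⟨ω_k, θ_l − θ_j⟩) for all l, j, the approximation h(θ) = Σ_{m=1}^M c_m(θ) v_m with c_m(θ) = λ_0 + Σ_{k=1}^K λ_k cos(⟨ω_k, θ − θ_m⟩) and v_m = Σ_{j=1}^M G⁻¹(m, j) a(θ_j) is translation invariant: ⟨h(θ), h(θ')⟩ = ⟨h(θ − τ), h(θ' − τ)⟩ for all θ, θ', τ ∈ ℝ^D. -/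

import Mathlib

open RealInnerProductSpace

open scoped Matrix

/-- If `G = F * B` is invertible with `F` square up to reindexing, then
`(B * G⁻¹) * F = 1`, so `G⁻¹` cancels between `B` and `F`. -/
theorem Matrix.vecMul_dotProduct_inv_mulVec {n s R : Type*} [Fintype n] [DecidableEq n]
    [Fintype s] [DecidableEq s] [CommRing R] (hcard : Fintype.card n = Fintype.card s)
    (F : Matrix n s R) (B : Matrix s n R) (hG : IsUnit (F * B).det) (x y : s → R) :
    (x ᵥ* B) ⬝ᵥ ((F * B)⁻¹ *ᵥ (F *ᵥ y)) = x ⬝ᵥ y := by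
  have hright : F * (B * (F * B)⁻¹) = 1 := by
    rw [← Matrix.mul_assoc, Matrix.mul_nonsing_inv _ hG]
  have hleft : B * (F * B)⁻¹ * F = 1 := (Matrix.mul_eq_one_comm_of_card_eq _ _ _ hcard).1 hright
  rw [← Matrix.dotProduct_mulVec, Matrix.mulVec_mulVec, Matrix.mulVec_mulVec,
    hleft, Matrix.one_mulVec]

/-- The dual vectors `∑ j, G⁻¹ m j • u j` of a family with invertible Gram matrix `G`
have Gram matrix `G⁻¹` (transposed). -/
theorem inner_dual_dual {n H : Type*} [Fintype n] [DecidableEq n] [NormedAddCommGroup H]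
    [InnerProductSpace ℝ H] (u : n → H) (G : Matrix n n ℝ) (hG : ∀ l j, G l j = ⟪u l, u j⟫)
    (hdet : IsUnit G.det) (m p : n) :
    ⟪∑ j, G⁻¹ m j • u j, ∑ j, G⁻¹ p j • u j⟫ = G⁻¹ p m := by
  have hmul : (G⁻¹ * G * (G⁻¹)ᵀ) m p = G⁻¹ p m := by
    rw [Matrix.nonsing_inv_mul _ hdet, Matrix.one_mul, Matrix.transpose_apply]
  rw [← hmul]
  simp only [Matrix.mul_apply, Matrix.transpose_apply, sum_inner, inner_sum,
    real_inner_smul_left, real_inner_smul_right, hG, Finset.sum_mul]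
  exact Finset.sum_congr rfl fun _ _ => Finset.sum_congr rfl fun _ _ => by ring

/-- Trigonometric features `1, cos ⟪ω k, t⟫, sin ⟪ω k, t⟫`. -/
noncomputable def trigFeature {ι E : Type*} [NormedAddCommGroup E] [InnerProductSpace ℝ E]
    (ω : ι → E) (t : E) : Unit ⊕ ι ⊕ ι → ℝ :=
  Sum.elim (fun _ => 1) (Sum.elim (fun k => Real.cos ⟪ω k, t⟫) (fun k => Real.sin ⟪ω k, t⟫))

/-- Weights `lam0, lam k, lam k` attached to the trigonometric features. -/
def trigWeight {ι : Type*} (lam0 : ℝ) (lam : ι → ℝ) : Unit ⊕ ι ⊕ ι → ℝ :=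
  Sum.elim (fun _ => lam0) (Sum.elim lam lam)

theorem trigFeature_dotProduct {ι E : Type*} [Fintype ι] [NormedAddCommGroup E]
    [InnerProductSpace ℝ E] (lam0 : ℝ) (lam : ι → ℝ) (ω : ι → E) (t t' : E) :
    trigFeature ω t ⬝ᵥ (trigWeight lam0 lam * trigFeature ω t') =
      lam0 + ∑ k, lam k * Real.cos ⟪ω k, t - t'⟫ := by
  simp only [dotProduct, Pi.mul_apply, trigFeature, trigWeight, Fintype.sum_sum_type,
    Sum.elim_inl, Sum.elim_inr, Finset.univ_unique, Finset.sum_singleton, inner_sub_right,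
    Real.cos_sub, ← Finset.sum_add_distrib]
  congr 1
  · ring
  · exact Finset.sum_congr rfl fun _ _ => by ring

/-- **Translation invariance of the constructed approximation (odd case `M = 2K+1`).**
Under the raised-cosine decomposition of an invertible Gram matrix (with `λ₀ > 0`,
`λ_k > 0`), the constructed low-rank approximation `h θ = ∑ m, c m θ • v m` is
translation invariant. -/
theorem lowrank_translation_invariant_odd
    {H : Type*} [NormedAddCommGroup H] [InnerProductSpace ℝ H]
    {D : ℕ} (hD : 1 ≤ D) {K : ℕ}
    (a : EuclideanSpace ℝ (Fin D) → H)
    (θ : Fin (2 * K + 1) → EuclideanSpace ℝ (Fin D))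
    (lam0 : ℝ) (hlam0 : 0 < lam0)
    (lam : Fin K → ℝ) (hlam : ∀ k, 0 < lam k)
    (ω : Fin K → EuclideanSpace ℝ (Fin D))
    (G : Matrix (Fin (2 * K + 1)) (Fin (2 * K + 1)) ℝ)
    (hG : ∀ l j, G l j = ⟪a (θ l), a (θ j)⟫)
    (hGinv : Invertible G)
    (hdecomp : ∀ l j, G l j = lam0 + ∑ k : Fin K, lam k * Real.cos ⟪ω k, θ l - θ j⟫)
    (c : Fin (2 * K + 1) → EuclideanSpace ℝ (Fin D) → ℝ)
    (hc : ∀ m t, c m t = lam0 + ∑ k : Fin K, lam k * Real.cos ⟪ω k, t - θ m⟫)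
    (v : Fin (2 * K + 1) → H)
    (hv : ∀ m, v m = ∑ j : Fin (2 * K + 1), G⁻¹ m j • a (θ j))
    (h : EuclideanSpace ℝ (Fin D) → H)
    (hh : ∀ t, h t = ∑ m : Fin (2 * K + 1), c m t • v m) :
    ∀ t t' τ : EuclideanSpace ℝ (Fin D), ⟪h t, h t'⟫ = ⟪h (t - τ), h (t' - τ)⟫ := by
  intro t t' τ
  have hdet : IsUnit G.det := (Matrix.isUnit_iff_isUnit_det G).1 (isUnit_of_invertible G)
  let F : Matrix (Fin (2 * K + 1)) (Unit ⊕ Fin K ⊕ Fin K) ℝ :=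
    Matrix.of fun m => trigFeature ω (θ m)
  let B : Matrix (Unit ⊕ Fin K ⊕ Fin K) (Fin (2 * K + 1)) ℝ :=
    Matrix.of fun s m => (trigWeight lam0 lam * trigFeature ω (θ m)) s
  have hFB : F * B = G := by
    ext l j
    rw [hdecomp, ← trigFeature_dotProduct]
    rfl
  have hcB : ∀ t, (fun m => c m t) = trigFeature ω t ᵥ* B := by
    intro t
    ext m
    rw [hc, ← trigFeature_dotProduct]
    rfl
  have hcF : ∀ t, (fun m => c m t) = F *ᵥ (trigWeight lam0 lam * trigFeature ω t) := by
    intro t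
    ext m
    have hcos : ∀ k, Real.cos ⟪ω k, t - θ m⟫ = Real.cos ⟪ω k, θ m - t⟫ := fun k => by
      rw [← neg_sub, inner_neg_right, Real.cos_neg]
    simp only [hc, hcos]
    rw [← trigFeature_dotProduct]
    rfl
  have hcard : Fintype.card (Fin (2 * K + 1)) = Fintype.card (Unit ⊕ Fin K ⊕ Fin K) := by
    simp only [Fintype.card_fin, Fintype.card_sum, Fintype.card_unit]
    omega
  have hkernel : ∀ t t', ⟪h t, h t'⟫ = lam0 + ∑ k, lam k * Real.cos ⟪ω k, t' - t⟫ := by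
    intro t t'
    have hquad : ⟪h t, h t'⟫ = (fun m => c m t') ⬝ᵥ (G⁻¹ *ᵥ fun m => c m t) := by
      have hdual : ∀ m p, ⟪v m, v p⟫ = G⁻¹ p m := fun m p => by
        rw [hv, hv, inner_dual_dual (fun j => a (θ j)) G hG hdet]
      simp only [hh, dotProduct, Matrix.mulVec, sum_inner, inner_sum,
        real_inner_smul_left, real_inner_smul_right, hdual, Finset.mul_sum]
      exact Finset.sum_congr rfl fun _ _ => Finset.sum_congr rfl fun _ _ => by ring
    rw [hquad, hcB t', hcF t, ← hFB,
      Matrix.vecMul_dotProduct_inv_mulVec hcard F B (hFB ▸ hdet), trigFeature_dotProduct]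
  rw [hkernel, hkernel, sub_sub_sub_cancel_right]
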